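/- With Φ_0(x) = ∏_{j<k} sin((x_k−x_j)/2)^{λ M_j M_k} (on the wedge −π < x_1 < ⋯ < x_N < π, with M_j > 0 and λ > 0), the differential operator H_N = −∑_j (1/M_j) ∂²/∂x_j² + ∑_{j<k} γ_{jk}/(4 sin²((x_j−x_k)/2)) with γ_{jk} = (M_j+M_k)λ(M_j M_k λ − 1) satisfies H_N Φ_0 = E_0 Φ_0, where E_0 = (λ²/12)·((∑_j M_j)³ − ∑_j M_j³). -/

import Mathlib

open Real Finset

/-!
Every factor `sin ((y k - y j) / 2) ^ a` has a cotangent as logarithmic derivative, so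
`∂ᵢΦ₀ = Φ₀ Gᵢ` with `Gᵢ = (λ Mᵢ / 2) ∑ₖ Mₖ cot ((yᵢ - yₖ) / 2)`, and `∂ᵢ²Φ₀ = (Gᵢ² + ∂ᵢGᵢ) Φ₀`. The
terms `∂ᵢGᵢ` cancel the part of the potential which is linear in `λ`. What remains is quadratic in
the cotangents: expanding `Gᵢ²` gives three-body terms, which add up to a constant because
`cot u cot v + cot v cot w + cot w cot u = 1` whenever `u + v + w = 0`, while the terms in which two
of the three particles coincide cancel the rest of the potential through `sin⁻² = 1 + cot²`.
-/

namespace CalogeroSutherland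

section Trigonometry

lemma cot_zero : cot 0 = 0 := by
  rw [cot_eq_cos_div_sin, sin_zero, div_zero]

lemma cot_neg (x : ℝ) : cot (-x) = -cot x := by
  rw [cot_eq_cos_div_sin, cot_eq_cos_div_sin, sin_neg, cos_neg, div_neg]

lemma cot_half_sub_comm (a b : ℝ) : cot ((a - b) / 2) = -cot ((b - a) / 2) := by
  rw [← cot_neg, ← neg_div, neg_sub]

lemma inv_sin_sq_eq_one_add_cot_sq {x : ℝ} (hx : sin x ≠ 0) :
    (sin x ^ 2)⁻¹ = 1 + cot x ^ 2 := by
  rw [cot_eq_cos_div_sin, div_pow, cos_sq']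
  field_simp
  ring

lemma cot_mul_cot_cyclic_of_add_eq_zero {u v w : ℝ} (h : u + v + w = 0)
    (hu : sin u ≠ 0) (hv : sin v ≠ 0) (hw : sin w ≠ 0) :
    cot u * cot v + cot v * cot w + cot w * cot u = 1 := by
  obtain rfl : w = -(u + v) := by linarith
  have huv : sin (u + v) ≠ 0 := by simpa only [sin_neg, neg_ne_zero] using hw
  have cot_add : cot (u + v) * (cot u + cot v) = cot u * cot v - 1 := by
    simp only [cot_eq_cos_div_sin]
    field_simp
    rw [sin_add, cos_add]
    ring
  rw [cot_neg]
  linear_combination -cot_add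

lemma hasDerivAt_cot {x : ℝ} (hx : sin x ≠ 0) : HasDerivAt cot (-(sin x ^ 2)⁻¹) x := by
  have h := (hasDerivAt_cos x).div (hasDerivAt_sin x) hx
  rw [show cot = cos / sin from funext cot_eq_cos_div_sin]
  refine h.congr_deriv ?_
  field_simp
  linear_combination -sin_sq_add_cos_sq x

lemma hasDerivAt_sin_rpow {u : ℝ → ℝ} {u' t : ℝ} (hu : HasDerivAt u u' t) (ht : sin (u t) ≠ 0)
    (a : ℝ) :
    HasDerivAt (fun s ↦ sin (u s) ^ a) (sin (u t) ^ a * (a * cot (u t) * u')) t := by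
  refine (hu.sin.rpow_const (p := a) (.inl ht)).congr_deriv ?_
  rw [rpow_sub_one ht, cot_eq_cos_div_sin]
  ring

end Trigonometry

section LogarithmicDerivative

variable {𝕜 : Type*} [NontriviallyNormedField 𝕜]

lemma hasDerivAt_prod_mul_sum {α : Type*} {s : Finset α} {f : α → 𝕜 → 𝕜} {g : α → 𝕜} {t : 𝕜}
    (h : ∀ i ∈ s, HasDerivAt (f i) (f i t * g i) t) :
    HasDerivAt (fun r ↦ ∏ i ∈ s, f i r) ((∏ i ∈ s, f i t) * ∑ i ∈ s, g i) t := by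
  classical
  refine (HasDerivAt.fun_finsetProd h).congr_deriv ?_
  rw [mul_sum]
  refine sum_congr rfl fun i hi ↦ ?_
  rw [smul_eq_mul, ← mul_assoc, prod_erase_mul s (f · t) hi]

lemma iterate_deriv_two_eq_of_eventually_hasDerivAt {f g : 𝕜 → 𝕜} {g' t : 𝕜}
    (hf : ∀ᶠ s in nhds t, HasDerivAt f (f s * g s) s) (hg : HasDerivAt g g' t) :
    deriv^[2] f t = (g t ^ 2 + g') * f t := by
  have hderiv : deriv f =ᶠ[nhds t] f * g := hf.mono fun s hs ↦ hs.deriv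
  calc deriv^[2] f t = deriv (f * g) t := hderiv.deriv_eq
    _ = f t * g t * g t + f t * g' := (hf.self_of_nhds.mul hg).deriv
    _ = (g t ^ 2 + g') * f t := by ring

end LogarithmicDerivative

section Sums

lemma sum_sum_Ioi_add_eq_sum_sum {ι A : Type*} [Fintype ι] [LinearOrder ι]
    [LocallyFiniteOrderTop ι] [LocallyFiniteOrderBot ι] [AddCommMonoid A]
    {f : ι → ι → A} (hf : ∀ i, f i i = 0) :
    ∑ i, ∑ k ∈ Ioi i, (f i k + f k i) = ∑ i, ∑ k, f i k := by
  calc ∑ i, ∑ k ∈ Ioi i, (f i k + f k i) = ∑ i, ∑ k ∈ {i}ᶜ, f i k :=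
        sum_sum_Ioi_add_eq_sum_sum_off_diag fun k i ↦ f i k
    _ = ∑ i, ∑ k, f i k := by
        refine sum_congr rfl fun i _ ↦ ?_
        rw [Fintype.sum_eq_add_sum_compl i, hf, zero_add]

lemma three_mul_sum_sum_sum_eq_sum_cyclic {ι R : Type*} [Fintype ι] [CommSemiring R]
    (f : ι → ι → ι → R) :
    3 * ∑ i, ∑ k, ∑ l, f i k l = ∑ i, ∑ k, ∑ l, (f i k l + f k l i + f l i k) := by
  have rotate : ∑ i, ∑ k, ∑ l, f k l i = ∑ i, ∑ k, ∑ l, f i k l := sum_comm_cycle.symm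
  have rotate_twice : ∑ i, ∑ k, ∑ l, f l i k = ∑ i, ∑ k, ∑ l, f i k l := sum_comm_cycle
  simp only [sum_add_distrib]
  rw [rotate, rotate_twice]
  ring

variable {ι R : Type*} [DecidableEq ι] [CommRing R]

lemma cyclic_eq_ite_of_cyclic_eq_one {C S : ι → ι → R} (hC : ∀ i k, C k i = -C i k)
    (hC₀ : ∀ i, C i i = 0) (hS : ∀ i k, S i k = if i = k then 0 else 1 + C i k ^ 2)
    (hcyclic : ∀ i k l, i ≠ k → k ≠ l → l ≠ i → C i k * C k l + C k l * C l i + C l i * C i k = 1)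
    (i k l : ι) :
    C i k * C i l + C k l * C k i + C l i * C l k =
      (if i = k then S k l else 0) + (if k = l then S l i else 0) + (if l = i then S i k else 0)
        + (if i = k then if k = l then 1 else 0 else 0) - 1 := by
  rcases eq_or_ne i k with rfl | hik
  · rcases eq_or_ne i l with rfl | hil
    · simp [hC₀, hS]
    · simp only [hC₀, hS, hC i l, hil, hil.symm, if_true, if_false]
      ring
  · rcases eq_or_ne k l with rfl | hkl
    · simp only [hC₀, hS, hC i k, hik, hik.symm, if_true, if_false]
      ring
    · rcases eq_or_ne l i with rfl | hli
      · simp only [hC₀, hS, hC k l, hik, hkl, if_true, if_false]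
        ring
      · simp only [if_neg hik, if_neg hkl, if_neg hli]
        rw [hC l i, hC i k, hC k l]
        linear_combination -hcyclic i k l hik hkl hli

theorem three_mul_sum_mul_sum_sq_eq [Fintype ι] (M : ι → R) {C S : ι → ι → R}
    (hC : ∀ i k, C k i = -C i k) (hC₀ : ∀ i, C i i = 0)
    (hS : ∀ i k, S i k = if i = k then 0 else 1 + C i k ^ 2)
    (hcyclic : ∀ i k l, i ≠ k → k ≠ l → l ≠ i →
      C i k * C k l + C k l * C l i + C l i * C i k = 1) :
    3 * ∑ i, M i * (∑ k, M k * C i k) ^ 2 =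
      3 * ∑ i, ∑ k, M i ^ 2 * M k * S i k - ((∑ i, M i) ^ 3 - ∑ i, M i ^ 3) := by
  have expand_sq : ∑ i, M i * (∑ k, M k * C i k) ^ 2 =
      ∑ i, ∑ k, ∑ l, M i * M k * M l * (C i k * C i l) := by
    simp only [sq, sum_mul_sum]
    simp only [mul_sum]
    exact sum_congr rfl fun i _ ↦ sum_congr rfl fun k _ ↦ sum_congr rfl fun l _ ↦ by ring
  have expand_cube : (∑ i, M i) ^ 3 = ∑ i, ∑ k, ∑ l, M i * M k * M l := by
    simp only [pow_three, sum_mul_sum]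
    simp only [mul_sum, mul_assoc]
  have two_coincide : ∑ i, ∑ k, M i ^ 2 * M k * S i k =
      ∑ i, ∑ k, ∑ l, M i * M k * M l * if i = k then S k l else 0 := by
    simp only [mul_ite, mul_zero, sum_ite_irrel, sum_const_zero, sum_ite_eq, mem_univ, if_true, sq]
  have three_coincide : ∑ i, M i ^ 3 =
      ∑ i, ∑ k, ∑ l, M i * M k * M l * if i = k then if k = l then 1 else 0 else 0 := by
    simp only [mul_ite, mul_zero, mul_one, sum_ite_irrel, sum_const_zero, sum_ite_eq, mem_univ,
      if_true, pow_succ, pow_zero, one_mul]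
  rw [expand_sq, two_coincide, expand_cube, three_coincide, three_mul_sum_sum_sum_eq_sum_cyclic,
    three_mul_sum_sum_sum_eq_sum_cyclic]
  simp only [← sum_sub_distrib]
  refine sum_congr rfl fun i _ ↦ sum_congr rfl fun k _ ↦ sum_congr rfl fun l _ ↦ ?_
  linear_combination M i * M k * M l * cyclic_eq_ite_of_cyclic_eq_one hC hC₀ hS hcyclic i k l

end Sums

variable {ι : Type*}

/-- The set of configurations `y` of particles at angles `y j` on the unit circle in which no two
particles coincide. It is the natural domain of the Calogero–Sutherland operator, whose potential
has all its poles outside this set. -/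
def configurationSpace (ι : Type*) : Set (ι → ℝ) :=
  {y | ∀ j k, j ≠ k → sin ((y j - y k) / 2) ≠ 0}

lemma isOpen_configurationSpace [Finite ι] : IsOpen (configurationSpace ι) := by
  simp only [configurationSpace, Set.ofPred_forall]
  exact isOpen_iInter_of_finite fun j ↦ isOpen_iInter_of_finite fun k ↦
    isOpen_iInter_of_finite fun _ ↦ isOpen_ne_fun (by fun_prop) (by fun_prop)

lemma mem_configurationSpace_of_injective {x : ι → ℝ} (hx : Function.Injective x)
    (hlo : ∀ j, -π < x j) (hhi : ∀ j, x j < π) : x ∈ configurationSpace ι := by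
  intro j k hjk
  have hsub : x j - x k ≠ 0 := sub_ne_zero.mpr (hx.ne hjk)
  rw [Ne, sin_eq_zero_iff_of_lt_of_lt (by linarith [hlo j, hhi k]) (by linarith [hhi j, hlo k])]
  exact div_ne_zero hsub two_ne_zero

variable [Fintype ι]

/-- The components `Gᵢ = ∂ᵢ log Φ₀` of the logarithmic gradient of the ground state `Φ₀`. The sum
may include `k = i` because `cot 0 = 0` in Mathlib. -/
noncomputable def logGradient (M : ι → ℝ) (lam : ℝ) (y : ι → ℝ) (i : ι) : ℝ :=
  lam * M i / 2 * ∑ k, M k * cot ((y i - y k) / 2)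

lemma hasDerivAt_logGradient_update [DecidableEq ι] (M : ι → ℝ) (lam : ℝ) {x : ι → ℝ}
    (hx : x ∈ configurationSpace ι) (i : ι) :
    HasDerivAt (fun t ↦ logGradient M lam (Function.update x i t) i)
      (-(lam * M i / 4 * ∑ k, M k * (sin ((x i - x k) / 2) ^ 2)⁻¹)) (x i) := by
  have hterm (k : ι) : HasDerivAt
      (fun t ↦ M k * cot ((Function.update x i t i - Function.update x i t k) / 2))
      (M k * (-(sin ((x i - x k) / 2) ^ 2)⁻¹ * (1 / 2))) (x i) := by
    rcases eq_or_ne i k with rfl | hik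
    · simpa using hasDerivAt_const (x i) (M i * cot 0)
    · simp only [Function.update_self, Function.update_of_ne hik.symm]
      have hangle : HasDerivAt (fun t ↦ (t - x k) / 2) (1 / 2) (x i) :=
        ((hasDerivAt_id' _).sub_const _).div_const 2
      exact ((hasDerivAt_cot (hx i k hik)).comp (x i) hangle).const_mul (M k)
  refine ((HasDerivAt.fun_sum fun k _ ↦ hterm k).const_mul (lam * M i / 2)).congr_deriv ?_
  rw [← mul_neg, ← sum_neg_distrib, mul_sum, mul_sum]
  exact sum_congr rfl fun k _ ↦ by ring

lemma three_mul_sum_mul_sum_cot_sq_eq (M : ι → ℝ) {x : ι → ℝ}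
    (hx : x ∈ configurationSpace ι) :
    3 * ∑ i, M i * (∑ k, M k * cot ((x i - x k) / 2)) ^ 2 =
      3 * ∑ i, ∑ k, M i ^ 2 * M k * (sin ((x i - x k) / 2) ^ 2)⁻¹
        - ((∑ i, M i) ^ 3 - ∑ i, M i ^ 3) := by
  classical
  refine three_mul_sum_mul_sum_sq_eq M (C := fun i k ↦ cot ((x i - x k) / 2)) ?_ ?_ ?_ ?_
  · exact fun i k ↦ cot_half_sub_comm (x k) (x i)
  · simp [cot_zero]
  · intro i k
    split_ifs with hik
    · simp [hik]
    · exact inv_sin_sq_eq_one_add_cot_sq (hx i k hik)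
  · intro i k l hik hkl hli
    exact cot_mul_cot_cyclic_of_add_eq_zero (by ring) (hx i k hik) (hx k l hkl) (hx l i hli)

variable [LinearOrder ι] [LocallyFiniteOrderTop ι]

/-- The ground state `Φ₀` of the Calogero–Sutherland operator with masses `M` and coupling `lam`.
Off the wedge a base may be negative, in which case `Real.rpow` is `s ^ a = |s| ^ a * cos (a * π)`:
on each component of the configuration space `groundState` is a constant multiple, possibly zero, of
`∏ j < k, |sin ((y k - y j) / 2)| ^ (lam * M j * M k)`. -/
noncomputable def groundState (M : ι → ℝ) (lam : ℝ) (y : ι → ℝ) : ℝ :=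
  ∏ j, ∏ k ∈ Ioi j, sin ((y k - y j) / 2) ^ (lam * M j * M k)

/-- The Calogero–Sutherland operator `H_N` for distinguishable particles with masses `M` and
coupling `lam`, applied to `ψ` at `x`; `∂²/∂x_j²` is the second derivative of `ψ` along the `j`-th
coordinate line through `x`. -/
noncomputable def hamiltonian (M : ι → ℝ) (lam : ℝ) (ψ : (ι → ℝ) → ℝ) (x : ι → ℝ) : ℝ :=
  (-∑ j, (1 / M j) * (deriv^[2] (fun t ↦ ψ (Function.update x j t)) (x j)))
    + (∑ j, ∑ k ∈ Ioi j,
        ((M j + M k) * lam * (M j * M k * lam - 1)) / (4 * sin ((x j - x k) / 2) ^ 2)) * ψ x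

variable [LocallyFiniteOrderBot ι]

lemma hasDerivAt_groundState_comp (M : ι → ℝ) (lam : ℝ) {y : ℝ → ι → ℝ} {y' : ι → ℝ} {t : ℝ}
    (hy : HasDerivAt y y' t) (ht : y t ∈ configurationSpace ι) :
    HasDerivAt (fun s ↦ groundState M lam (y s))
      (groundState M lam (y t) * ∑ i, y' i * logGradient M lam (y t) i) t := by
  have hcoord : ∀ i, HasDerivAt (fun s ↦ y s i) (y' i) t := hasDerivAt_pi.mp hy
  refine (hasDerivAt_prod_mul_sum fun j _ ↦ hasDerivAt_prod_mul_sum fun k hk ↦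
    hasDerivAt_sin_rpow (((hcoord k).sub (hcoord j)).div_const 2)
      (ht k j (mem_Ioi.mp hk).ne') _).congr_deriv ?_
  let f (i k : ι) : ℝ := y' i * (lam * M i / 2 * (M k * cot ((y t i - y t k) / 2)))
  have hpair (j k : ι) : lam * M j * M k * cot ((y t k - y t j) / 2) * ((y' k - y' j) / 2) =
      f j k + f k j := by
    simp only [f, cot_half_sub_comm (y t j) (y t k)]
    ring
  have hdiag (i : ι) : f i i = 0 := by simp [f, cot_zero]
  simp only [Pi.sub_apply, hpair, sum_sum_Ioi_add_eq_sum_sum hdiag, groundState, logGradient, f,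
    mul_sum]

lemma iterate_deriv_two_groundState_update (M : ι → ℝ) (lam : ℝ) {x : ι → ℝ}
    (hx : x ∈ configurationSpace ι) (i : ι) :
    deriv^[2] (fun t ↦ groundState M lam (Function.update x i t)) (x i) =
      (logGradient M lam x i ^ 2 - lam * M i / 4 * ∑ k, M k * (sin ((x i - x k) / 2) ^ 2)⁻¹)
        * groundState M lam x := by
  have hmem : ∀ᶠ t in nhds (x i), Function.update x i t ∈ configurationSpace ι :=
    (hasDerivAt_update x i (x i)).continuousAt.eventually_mem
      (isOpen_configurationSpace.mem_nhds (by rwa [Function.update_eq_self]))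
  have hderiv : ∀ᶠ t in nhds (x i), HasDerivAt
      (fun s ↦ groundState M lam (Function.update x i s))
      (groundState M lam (Function.update x i t) * logGradient M lam (Function.update x i t) i)
      t := by
    filter_upwards [hmem] with t ht
    simpa [Pi.single_apply] using
      hasDerivAt_groundState_comp M lam (hasDerivAt_update x i t) ht
  rw [iterate_deriv_two_eq_of_eventually_hasDerivAt hderiv
    (hasDerivAt_logGradient_update M lam hx i), Function.update_eq_self, sub_eq_add_neg]

lemma sum_iterate_deriv_two_groundState_update {M : ι → ℝ} (hM : ∀ j, M j ≠ 0) (lam : ℝ)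
    {x : ι → ℝ} (hx : x ∈ configurationSpace ι) :
    ∑ j, (1 / M j) * deriv^[2] (fun t ↦ groundState M lam (Function.update x j t)) (x j) =
      (lam ^ 2 / 4 * ∑ i, M i * (∑ k, M k * cot ((x i - x k) / 2)) ^ 2
        - lam / 4 * ∑ i, ∑ k, M k * (sin ((x i - x k) / 2) ^ 2)⁻¹) * groundState M lam x := by
  rw [mul_sum, mul_sum, ← sum_sub_distrib, sum_mul]
  refine sum_congr rfl fun i _ ↦ ?_
  rw [iterate_deriv_two_groundState_update M lam hx, logGradient]
  field [hM i]

lemma sum_sum_Ioi_potential_eq (M : ι → ℝ) (lam : ℝ) (x : ι → ℝ) :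
    ∑ j, ∑ k ∈ Ioi j,
        ((M j + M k) * lam * (M j * M k * lam - 1)) / (4 * sin ((x j - x k) / 2) ^ 2) =
      lam ^ 2 / 4 * ∑ i, ∑ k, M i ^ 2 * M k * (sin ((x i - x k) / 2) ^ 2)⁻¹
        - lam / 4 * ∑ i, ∑ k, M k * (sin ((x i - x k) / 2) ^ 2)⁻¹ := by
  let f (i k : ι) : ℝ :=
    (lam ^ 2 / 4 * (M i ^ 2 * M k) - lam / 4 * M k) * (sin ((x i - x k) / 2) ^ 2)⁻¹
  have hpair (j k : ι) :
      ((M j + M k) * lam * (M j * M k * lam - 1)) / (4 * sin ((x j - x k) / 2) ^ 2) =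
        f j k + f k j := by
    have heven : sin ((x k - x j) / 2) ^ 2 = sin ((x j - x k) / 2) ^ 2 := by
      rw [← neg_sq, ← sin_neg, ← neg_div, neg_sub]
    simp only [f, heven]
    rw [div_eq_mul_inv, mul_inv]
    ring
  have hdiag (i : ι) : f i i = 0 := by simp [f]
  simp only [hpair, sum_sum_Ioi_add_eq_sum_sum hdiag, f, mul_sum, ← sum_sub_distrib]
  exact sum_congr rfl fun i _ ↦ sum_congr rfl fun k _ ↦ by ring

end CalogeroSutherland

open CalogeroSutherland in
theorem stmt4_general {ι : Type*} [Fintype ι] [LinearOrder ι] [LocallyFiniteOrderTop ι]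
    [LocallyFiniteOrderBot ι] {M : ι → ℝ} (hM : ∀ j, M j ≠ 0) (lam : ℝ) {x : ι → ℝ}
    (hx : x ∈ configurationSpace ι) :
    hamiltonian M lam (groundState M lam) x =
      ((lam ^ 2 / 12) * ((∑ j, M j) ^ 3 - ∑ j, (M j) ^ 3)) * groundState M lam x := by
  rw [hamiltonian, sum_iterate_deriv_two_groundState_update hM lam hx, sum_sum_Ioi_potential_eq]
  linear_combination
    -(lam ^ 2 / 12) * groundState M lam x * three_mul_sum_mul_sum_cot_sq_eq M hx

/-- With `Φ₀(x) = ∏_{j<k} sin((x_k−x_j)/2)^{λM_jM_k}` on the wedge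
`−π < x_1 < ⋯ < x_N < π` (`M_j > 0`, `λ > 0`), the generalized CS operator
`H_N = −∑_j (1/M_j)∂²/∂x_j² + ∑_{j<k} γ_{jk}/(4sin²((x_j−x_k)/2))`,
`γ_{jk} = (M_j+M_k)λ(M_jM_kλ−1)`, satisfies `H_N Φ₀ = E₀ Φ₀` with
`E₀ = (λ²/12)((∑M_j)³ − ∑M_j³)`. -/
theorem stmt4 (N : ℕ) (M : Fin N → ℝ) (hM : ∀ j, 0 < M j) (lam : ℝ) (hlam : 0 < lam)
    (x : Fin N → ℝ) (hwedge : StrictMono x)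
    (hlo : ∀ j, -Real.pi < x j) (hhi : ∀ j, x j < Real.pi)
    (Φ : (Fin N → ℝ) → ℝ)
    (hΦ : ∀ y, Φ y = ∏ j, ∏ k ∈ Finset.Ioi j,
        Real.sin ((y k - y j) / 2) ^ (lam * M j * M k)) :
    (-∑ j, (1 / M j) * (deriv^[2] (fun t => Φ (Function.update x j t)) (x j)))
      + (∑ j, ∑ k ∈ Finset.Ioi j,
          ((M j + M k) * lam * (M j * M k * lam - 1)) / (4 * Real.sin ((x j - x k) / 2)^2)) * Φ x
    = ((lam^2 / 12) * ((∑ j, M j)^3 - ∑ j, (M j)^3)) * Φ x := by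
  obtain rfl : Φ = CalogeroSutherland.groundState M lam := funext hΦ
  exact stmt4_general (fun j ↦ (hM j).ne') lam
    (CalogeroSutherland.mem_configurationSpace_of_injective hwedge.injective hlo hhi)
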